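/- The variance of an n-qubit independent quantum error with identical per-qubit density f(θ₀) is V = 2 - 2(4π ∫₀^π f(θ₀)cos(θ₀)sin²(θ₀) dθ₀)^n. -/

import Mathlib

open Real Complex MeasureTheory

/-- The one-qubit error operator `W` of the paper. -/
noncomputable def Wmat (θ₀ θ₁ θ₂ : ℝ) : Matrix (Fin 2) (Fin 2) ℂ :=
  !![(Real.cos θ₀ : ℂ) + Complex.I * (Real.sin θ₀ * Real.cos θ₁ : ℝ),
     (-(Real.sin θ₀ * Real.sin θ₁ * Real.cos θ₂) : ℝ) +
       Complex.I * (Real.sin θ₀ * Real.sin θ₁ * Real.sin θ₂ : ℝ);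
     ((Real.sin θ₀ * Real.sin θ₁ * Real.cos θ₂) : ℝ) +
       Complex.I * (Real.sin θ₀ * Real.sin θ₁ * Real.sin θ₂ : ℝ),
     (Real.cos θ₀ : ℂ) - Complex.I * (Real.sin θ₀ * Real.cos θ₁ : ℝ)]

/-- The tensor (Kronecker) product `𝒲 = W₀ ⊗ ⋯ ⊗ W_{n-1}` acting on `(ℂ²)^{⊗ n}`,
realized as a matrix indexed by `Fin n → Fin 2`. -/
noncomputable def Wtens (n : ℕ) (θ₀ θ₁ θ₂ : Fin n → ℝ) :
    Matrix (Fin n → Fin 2) (Fin n → Fin 2) ℂ :=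
  fun j k => ∏ u : Fin n, Wmat (θ₀ u) (θ₁ u) (θ₂ u) (j u) (k u)

/-!
Since `𝒲` is unitary, `‖𝒲Φ - Φ‖² = 2 Re ⟪Φ, (1 - 𝒲)Φ⟫`, which is linear in `𝒲`. Independence turns
the mean of the tensor product into the tensor product of the one-qubit means. The angles `θ₁, θ₂`
average a one-qubit `W` over a 2-sphere, which cancels its imaginary quaternion part and leaves
`cos θ₀ • 1`; so each qubit contributes the scalar `4π ∫ f cos sin²`.
-/

section TensorMatrix

variable {ι R : Type*} [Fintype ι] [CommSemiring R] {l m n : ι → Type*}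

/-- The Kronecker product `⨂ u, A u`, with rows and columns indexed by tuples of indices. -/
def tensorMatrix (A : ∀ u, Matrix (m u) (n u) R) : Matrix (∀ u, m u) (∀ u, n u) R :=
  .of fun j k => ∏ u, A u (j u) (k u)

theorem tensorMatrix_apply (A : ∀ u, Matrix (m u) (n u) R) (j : ∀ u, m u) (k : ∀ u, n u) :
    tensorMatrix A j k = ∏ u, A u (j u) (k u) :=
  rfl

theorem tensorMatrix_mul [DecidableEq ι] [∀ u, Fintype (m u)]
    (A : ∀ u, Matrix (l u) (m u) R) (B : ∀ u, Matrix (m u) (n u) R) :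
    tensorMatrix (fun u => A u * B u) = tensorMatrix A * tensorMatrix B := by
  ext i k
  simp only [tensorMatrix_apply, Matrix.mul_apply, Fintype.prod_sum, Finset.prod_mul_distrib]

theorem tensorMatrix_one [∀ u, DecidableEq (m u)] :
    tensorMatrix (fun u => (1 : Matrix (m u) (m u) R)) = 1 := by
  ext j k
  simp only [tensorMatrix_apply, Matrix.one_apply, Fintype.prod_ite_zero, Finset.prod_const_one,
    funext_iff]

theorem tensorMatrix_smul {S : Type*} [CommSemiring S] [Algebra S R] (c : ι → S)
    (A : ∀ u, Matrix (m u) (n u) R) :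
    tensorMatrix (fun u => c u • A u) = (∏ u, c u) • tensorMatrix A := by
  ext j k
  simp only [tensorMatrix_apply, Matrix.smul_apply, Finset.prod_smul]

theorem tensorMatrix_conjTranspose [StarRing R] (A : ∀ u, Matrix (m u) (n u) R) :
    tensorMatrix (fun u => (A u).conjTranspose) = (tensorMatrix A).conjTranspose := by
  ext j k
  simp only [tensorMatrix_apply, Matrix.conjTranspose_apply, star_prod]

theorem tensorMatrix_mem_unitaryGroup {R : Type*} [CommRing R] [StarRing R] [DecidableEq ι]
    [∀ u, Fintype (m u)] [∀ u, DecidableEq (m u)] {A : ∀ u, Matrix (m u) (m u) R}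
    (hA : ∀ u, A u ∈ Matrix.unitaryGroup (m u) R) :
    tensorMatrix A ∈ Matrix.unitaryGroup (∀ u, m u) R := by
  simp only [Matrix.mem_unitaryGroup_iff, Matrix.star_eq_conjTranspose] at hA ⊢
  simp only [← tensorMatrix_conjTranspose, ← tensorMatrix_mul, hA, tensorMatrix_one]

end TensorMatrix

section Expectation

variable {𝕜 κ : Type*} [RCLike 𝕜] [Fintype κ] [DecidableEq κ]

/-- The real part of the expectation value `⟪x, M x⟫` of the observable `M` in the state `x`. The
real part makes it only `ℝ`-linear in `M`. -/
noncomputable def reExpectation (x : EuclideanSpace 𝕜 κ) : Matrix κ κ 𝕜 →ₗ[ℝ] ℝ where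
  toFun M := RCLike.re (inner 𝕜 x (Matrix.toEuclideanLin M x))
  map_add' M N := by simp only [map_add, LinearMap.add_apply, inner_add_right]
  map_smul' c M := by
    rw [RCLike.real_smul_eq_coe_smul (K := 𝕜) c M, map_smul, LinearMap.smul_apply,
      inner_smul_right, RCLike.re_ofReal_mul, RingHom.id_apply, smul_eq_mul]

theorem reExpectation_apply (x : EuclideanSpace 𝕜 κ) (M : Matrix κ κ 𝕜) :
    reExpectation x M = RCLike.re (inner 𝕜 x (Matrix.toEuclideanLin M x)) :=
  rfl

theorem reExpectation_eq_sum (x : EuclideanSpace 𝕜 κ) (M : Matrix κ κ 𝕜) :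
    reExpectation x M = ∑ i, ∑ j, RCLike.re (M i j * (x j * star (x i))) := by
  simp only [reExpectation_apply, PiLp.inner_apply, RCLike.inner_apply,
    Matrix.ofLp_toLpLin, Matrix.toLin'_apply, Matrix.mulVec, dotProduct, Finset.sum_mul, map_sum,
    RCLike.star_def, mul_assoc]

theorem reExpectation_one (x : EuclideanSpace 𝕜 κ) : reExpectation x 1 = ‖x‖ ^ 2 := by
  rw [reExpectation_apply, Matrix.toLpLin_one, LinearMap.id_apply, ← norm_sq_eq_re_inner]

theorem norm_toEuclideanLin_of_mem_unitaryGroup {U : Matrix κ κ 𝕜}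
    (hU : U ∈ Matrix.unitaryGroup κ 𝕜) (x : EuclideanSpace 𝕜 κ) :
    ‖Matrix.toEuclideanLin U x‖ = ‖x‖ :=
  ContinuousLinearMap.norm_map_of_mem_unitary
    (Unitary.map_mem (Matrix.toEuclideanCLM (n := κ) (𝕜 := 𝕜)) hU) x

theorem norm_toEuclideanLin_sub_self_sq {U : Matrix κ κ 𝕜} (hU : U ∈ Matrix.unitaryGroup κ 𝕜)
    (x : EuclideanSpace 𝕜 κ) :
    ‖Matrix.toEuclideanLin U x - x‖ ^ 2 = 2 * reExpectation x (1 - U) := by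
  rw [norm_sub_rev, norm_sub_sq (𝕜 := 𝕜), norm_toEuclideanLin_of_mem_unitaryGroup hU, map_sub,
    reExpectation_one, reExpectation_apply]
  ring

end Expectation

section EntrywiseIntegral

variable {𝕜 α m n : Type*} [RCLike 𝕜] [MeasurableSpace α] {ν : Measure α}
  {A B : α → Matrix m n 𝕜} {M N : Matrix m n 𝕜}

/-- `M` is the entrywise integral of the random matrix `A`. Integrability is part of the notion, and
working entrywise avoids choosing one of the norms on matrices. -/
def HasEntrywiseIntegral (ν : Measure α) (A : α → Matrix m n 𝕜) (M : Matrix m n 𝕜) : Prop :=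
  ∀ i j, Integrable (fun t => A t i j) ν ∧ ∫ t, A t i j ∂ν = M i j

namespace HasEntrywiseIntegral

theorem sub (hA : HasEntrywiseIntegral ν A M) (hB : HasEntrywiseIntegral ν B N) :
    HasEntrywiseIntegral ν (fun t => A t - B t) (M - N) := fun i j =>
  ⟨(hA i j).1.sub (hB i j).1, by
    simp only [Matrix.sub_apply, integral_sub (hA i j).1 (hB i j).1, (hA i j).2, (hB i j).2]⟩

theorem const_smul (hA : HasEntrywiseIntegral ν A M) (c : ℝ) :
    HasEntrywiseIntegral ν (fun t => c • A t) (c • M) := fun i j =>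
  ⟨(hA i j).1.smul c, by simp only [Matrix.smul_apply, integral_smul, (hA i j).2]⟩

theorem smul_const {g : α → ℝ} (hg : Integrable g ν) (M : Matrix m n 𝕜) :
    HasEntrywiseIntegral ν (fun t => g t • M) ((∫ t, g t ∂ν) • M) := fun i j =>
  ⟨hg.smul_const (M i j), by simp only [Matrix.smul_apply, integral_smul_const]⟩

theorem tensorMatrix {ι : Type*} [Fintype ι] {X : ι → Type*} [∀ u, MeasurableSpace (X u)]
    {μ : ∀ u, Measure (X u)} [∀ u, SigmaFinite (μ u)] {m n : ι → Type*}
    {A : ∀ u, X u → Matrix (m u) (n u) 𝕜} {M : ∀ u, Matrix (m u) (n u) 𝕜}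
    (hA : ∀ u, HasEntrywiseIntegral (μ u) (A u) (M u)) :
    HasEntrywiseIntegral (Measure.pi μ) (fun θ => tensorMatrix fun u => A u (θ u))
      (tensorMatrix M) := fun j k =>
  ⟨.fintype_prod_dep fun u => (hA u (j u) (k u)).1, by
    simp only [tensorMatrix_apply, ← (hA _ _ _).2]
    exact integral_fintype_prod_eq_prod fun u t => A u t (j u) (k u)⟩

theorem integral_reExpectation {κ : Type*} [Fintype κ] [DecidableEq κ] {A : α → Matrix κ κ 𝕜}
    {M : Matrix κ κ 𝕜} (hA : HasEntrywiseIntegral ν A M) (x : EuclideanSpace 𝕜 κ) :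
    ∫ t, reExpectation x (A t) ∂ν = reExpectation x M := by
  have hint (i j : κ) : Integrable (fun t => A t i j * (x j * star (x i))) ν :=
    (hA i j).1.mul_const _
  simp only [reExpectation_eq_sum]
  rw [integral_finsetSum _ fun i _ => integrable_finsetSum _ fun j _ => (hint i j).re]
  refine Finset.sum_congr rfl fun i _ => ?_
  rw [integral_finsetSum _ fun j _ => (hint i j).re]
  refine Finset.sum_congr rfl fun j _ => ?_
  rw [integral_re (hint i j), integral_mul_const, (hA i j).2]

end HasEntrywiseIntegral

theorem setIntegral_reExpectation_tensorMatrix_sub {ι : Type*} [Fintype ι] [DecidableEq ι]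
    {X : ι → Type*} [∀ u, MeasureSpace (X u)] [∀ u, SigmaFinite (volume : Measure (X u))]
    {κ : ι → Type*} [∀ u, Fintype (κ u)] [∀ u, DecidableEq (κ u)] {s : ∀ u, Set (X u)}
    {A B : ∀ u, X u → Matrix (κ u) (κ u) 𝕜} {M N : ∀ u, Matrix (κ u) (κ u) 𝕜}
    (hA : ∀ u, HasEntrywiseIntegral (volume.restrict (s u)) (A u) (M u))
    (hB : ∀ u, HasEntrywiseIntegral (volume.restrict (s u)) (B u) (N u))
    (x : EuclideanSpace 𝕜 (∀ u, κ u)) :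
    ∫ θ in Set.univ.pi s, reExpectation x
        (tensorMatrix (fun u => A u (θ u)) - tensorMatrix fun u => B u (θ u)) =
      reExpectation x (tensorMatrix M - tensorMatrix N) := by
  rw [volume_pi, Measure.restrict_pi_pi]
  exact ((HasEntrywiseIntegral.tensorMatrix hA).sub
    (HasEntrywiseIntegral.tensorMatrix hB)).integral_reExpectation x

theorem hasEntrywiseIntegral_add_cos_smul_add_sin_smul (A B C : Matrix m n 𝕜) :
    HasEntrywiseIntegral (volume.restrict (Set.Ico 0 (2 * π)))
      (fun t => A + Real.cos t • B + Real.sin t • C) ((2 * π) • A) := by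
  intro i j
  simp only [Matrix.add_apply, Matrix.smul_apply]
  refine ⟨(Continuous.integrableOn_Icc (by fun_prop)).mono_set Set.Ico_subset_Icc_self, ?_⟩
  rw [integral_Ico_eq_integral_Ioc, ← intervalIntegral.integral_of_le two_pi_pos.le,
    intervalIntegral.integral_add, intervalIntegral.integral_add,
    intervalIntegral.integral_smul_const, intervalIntegral.integral_smul_const,
    integral_cos, integral_sin]
  · simp only [intervalIntegral.integral_const, Real.sin_two_pi, Real.sin_zero, Real.cos_zero,
      Real.cos_two_pi, sub_self, sub_zero, zero_smul, add_zero]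
  all_goals exact Continuous.intervalIntegrable (by fun_prop) _ _

theorem hasEntrywiseIntegral_sin_smul_add_cos_smul (A B : Matrix m n 𝕜) :
    HasEntrywiseIntegral (volume.restrict (Set.Icc 0 π))
      (fun t => Real.sin t • (A + Real.cos t • B)) ((2 : ℝ) • A) := by
  intro i j
  simp only [smul_add, smul_smul, Matrix.add_apply, Matrix.smul_apply]
  refine ⟨Continuous.integrableOn_Icc (by fun_prop), ?_⟩
  rw [integral_Icc_eq_integral_Ioc, ← intervalIntegral.integral_of_le pi_pos.le,
    intervalIntegral.integral_add, intervalIntegral.integral_smul_const,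
    intervalIntegral.integral_smul_const, integral_sin, integral_sin_mul_cos₁]
  · norm_num
  all_goals exact Continuous.intervalIntegrable (by fun_prop) _ _

end EntrywiseIntegral

/-- `i σ_x`, an imaginary quaternion unit in `SU(2)`. -/
noncomputable def iPauliX : Matrix (Fin 2) (Fin 2) ℂ := !![0, I; I, 0]

/-- `i σ_y`, an imaginary quaternion unit in `SU(2)`. -/
noncomputable def iPauliY : Matrix (Fin 2) (Fin 2) ℂ := !![0, 1; -1, 0]

/-- `i σ_z`, an imaginary quaternion unit in `SU(2)`. -/
noncomputable def iPauliZ : Matrix (Fin 2) (Fin 2) ℂ := !![I, 0; 0, -I]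

/-- The mean of the error operator `Wmat θ₀ θ₁ θ₂` over the azimuthal angle `θ₂`. -/
noncomputable def azimuthalMean (θ₀ θ₁ : ℝ) : Matrix (Fin 2) (Fin 2) ℂ :=
  Real.cos θ₀ • 1 + Real.cos θ₁ • Real.sin θ₀ • iPauliZ

theorem Wmat_eq_azimuthalMean_add (θ₀ θ₁ θ₂ : ℝ) :
    Wmat θ₀ θ₁ θ₂ = azimuthalMean θ₀ θ₁ +
      Real.cos θ₂ • -(Real.sin θ₀ * Real.sin θ₁) • iPauliY +
      Real.sin θ₂ • (Real.sin θ₀ * Real.sin θ₁) • iPauliX := by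
  ext i j
  fin_cases i <;> fin_cases j <;>
    simp [Wmat, azimuthalMean, iPauliX, iPauliY, iPauliZ] <;> ring

theorem mem_unitaryGroup_of_star_mul_self_add {R : Type*} [CommRing R] [StarRing R] {z w : R}
    (h : star z * z + star w * w = 1) :
    !![z, -star w; w, star z] ∈ Matrix.unitaryGroup (Fin 2) R := by
  rw [Matrix.mem_unitaryGroup_iff', Matrix.star_eq_conjTranspose]
  ext i j
  fin_cases i <;> fin_cases j <;> simp [Matrix.mul_apply, Fin.sum_univ_two] <;> grind

theorem Wmat_mem_unitaryGroup (θ₀ θ₁ θ₂ : ℝ) : Wmat θ₀ θ₁ θ₂ ∈ Matrix.unitaryGroup (Fin 2) ℂ := by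
  set z : ℂ := ⟨Real.cos θ₀, Real.sin θ₀ * Real.cos θ₁⟩ with hz
  set w : ℂ := ⟨Real.sin θ₀ * Real.sin θ₁ * Real.cos θ₂, Real.sin θ₀ * Real.sin θ₁ * Real.sin θ₂⟩
    with hw
  have hW : Wmat θ₀ θ₁ θ₂ = !![z, -star w; w, star z] := by
    ext i j
    fin_cases i <;> fin_cases j <;> 
      simp [Wmat, Complex.ext_iff, hz, hw, -ofReal_cos, -ofReal_sin]
  have hnorm : normSq z + normSq w = 1 := by
    simp only [normSq_mk, hz, hw]
    linear_combination Real.sin_sq_add_cos_sq θ₀ +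
      Real.sin θ₀ ^ 2 * Real.sin_sq_add_cos_sq θ₁ +
      Real.sin θ₀ ^ 2 * Real.sin θ₁ ^ 2 * Real.sin_sq_add_cos_sq θ₂
  rw [hW]
  refine mem_unitaryGroup_of_star_mul_self_add ?_
  simp only [star_def, ← normSq_eq_conj_mul_self]
  exact_mod_cast hnorm

theorem hasEntrywiseIntegral_Wmat (θ₀ θ₁ : ℝ) :
    HasEntrywiseIntegral (volume.restrict (Set.Ico 0 (2 * π))) (Wmat θ₀ θ₁)
      ((2 * π) • azimuthalMean θ₀ θ₁) := by
  simp only [funext (Wmat_eq_azimuthalMean_add θ₀ θ₁)]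
  exact hasEntrywiseIntegral_add_cos_smul_add_sin_smul _ _ _

theorem hasEntrywiseIntegral_sin_smul_azimuthalMean (θ₀ : ℝ) :
    HasEntrywiseIntegral (volume.restrict (Set.Icc 0 π))
      (fun θ₁ => Real.sin θ₁ • azimuthalMean θ₀ θ₁) ((2 : ℝ) • Real.cos θ₀ • 1) :=
  hasEntrywiseIntegral_sin_smul_add_cos_smul _ _

section Qubits

variable {ι : Type*} [Fintype ι] [DecidableEq ι] (Φ : EuclideanSpace ℂ (ι → Fin 2))

theorem setIntegral_reExpectation_Wmat (p θ₀ θ₁ : ι → ℝ) :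
    ∫ θ₂ in Set.univ.pi fun _ => Set.Ico 0 (2 * π),
        reExpectation Φ (tensorMatrix (fun u => p u • 1) -
          tensorMatrix fun u => p u • Wmat (θ₀ u) (θ₁ u) (θ₂ u)) =
      reExpectation Φ (tensorMatrix (fun u => (p u * (2 * π)) • 1) -
        tensorMatrix fun u => (p u * (2 * π)) • azimuthalMean (θ₀ u) (θ₁ u)) := by
  have h_one : HasEntrywiseIntegral (volume.restrict (Set.Ico 0 (2 * π)))
      (fun _ => (1 : Matrix (Fin 2) (Fin 2) ℂ)) ((2 * π) • 1) := by
    simpa using hasEntrywiseIntegral_add_cos_smul_add_sin_smul (1 : Matrix (Fin 2) (Fin 2) ℂ) 0 0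
  simp only [mul_smul (p _)]
  exact setIntegral_reExpectation_tensorMatrix_sub (fun u => h_one.const_smul (p u))
    (fun u => (hasEntrywiseIntegral_Wmat (θ₀ u) (θ₁ u)).const_smul (p u)) Φ

theorem setIntegral_reExpectation_azimuthalMean (p θ₀ : ι → ℝ) :
    ∫ θ₁ in Set.univ.pi fun _ => Set.Icc 0 π,
        reExpectation Φ (tensorMatrix (fun u => (p u * Real.sin (θ₁ u)) • 1) -
          tensorMatrix fun u => (p u * Real.sin (θ₁ u)) • azimuthalMean (θ₀ u) (θ₁ u)) =
      reExpectation Φ (tensorMatrix (fun u => (p u * 2) • 1) -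
        tensorMatrix fun u => (p u * (2 * Real.cos (θ₀ u))) • 1) := by
  have h_one : HasEntrywiseIntegral (volume.restrict (Set.Icc 0 π))
      (fun t => Real.sin t • (1 : Matrix (Fin 2) (Fin 2) ℂ)) ((2 : ℝ) • 1) := by
    simpa using hasEntrywiseIntegral_sin_smul_add_cos_smul (1 : Matrix (Fin 2) (Fin 2) ℂ) 0
  simp only [mul_smul]
  exact setIntegral_reExpectation_tensorMatrix_sub (fun u => h_one.const_smul (p u))
    (fun u => (hasEntrywiseIntegral_sin_smul_azimuthalMean (θ₀ u)).const_smul (p u)) Φ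

theorem setIntegral_setIntegral_reExpectation_Wmat (p θ₀ : ι → ℝ) :
    ∫ θ₁ in Set.univ.pi fun _ => Set.Icc 0 π, ∫ θ₂ in Set.univ.pi fun _ => Set.Ico 0 (2 * π),
        reExpectation Φ (tensorMatrix (fun u => (p u * Real.sin (θ₁ u)) • 1) -
          tensorMatrix fun u => (p u * Real.sin (θ₁ u)) • Wmat (θ₀ u) (θ₁ u) (θ₂ u)) =
      reExpectation Φ (tensorMatrix (fun u => (4 * π * p u) • 1) -
        tensorMatrix fun u => (4 * π * (p u * Real.cos (θ₀ u))) • 1) := by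
  have h_one (a : ℝ) : a * (2 * π) * 2 = 4 * π * a := by ring
  have h_cos (a c : ℝ) : a * (2 * π) * (2 * c) = 4 * π * (a * c) := by ring
  simp only [setIntegral_reExpectation_Wmat, mul_right_comm _ (Real.sin _) (2 * π),
    setIntegral_reExpectation_azimuthalMean, h_one, h_cos]

theorem setIntegral_reExpectation_smul_one {s : Set ℝ} {g h : ι → ℝ → ℝ}
    (hg : ∀ u, IntegrableOn (g u) s) (hh : ∀ u, IntegrableOn (h u) s) :
    ∫ θ in Set.univ.pi fun _ => s, reExpectation Φ
        (tensorMatrix (fun u => g u (θ u) • 1) - tensorMatrix fun u => h u (θ u) • 1) =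
      ((∏ u, ∫ t in s, g u t) - ∏ u, ∫ t in s, h u t) * ‖Φ‖ ^ 2 := by
  rw [setIntegral_reExpectation_tensorMatrix_sub (fun u => .smul_const (hg u) 1)
    (fun u => .smul_const (hh u) 1), tensorMatrix_smul, tensorMatrix_smul, tensorMatrix_one,
    ← sub_smul, map_smul, reExpectation_one, smul_eq_mul]

end Qubits

theorem Wtens_eq_tensorMatrix (n : ℕ) (θ₀ θ₁ θ₂ : Fin n → ℝ) :
    Wtens n θ₀ θ₁ θ₂ = tensorMatrix fun u => Wmat (θ₀ u) (θ₁ u) (θ₂ u) :=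
  rfl

theorem prod_mul_norm_Wtens_sub_self_sq {n : ℕ} (p θ₀ θ₁ θ₂ : Fin n → ℝ)
    (Φ : EuclideanSpace ℂ (Fin n → Fin 2)) :
    (∏ u, p u) * ‖Matrix.toEuclideanLin (Wtens n θ₀ θ₁ θ₂) Φ - Φ‖ ^ 2 =
      2 * reExpectation Φ (tensorMatrix (fun u => p u • 1) -
        tensorMatrix fun u => p u • Wmat (θ₀ u) (θ₁ u) (θ₂ u)) := by
  have hW : Wtens n θ₀ θ₁ θ₂ ∈ Matrix.unitaryGroup (Fin n → Fin 2) ℂ :=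
    tensorMatrix_mem_unitaryGroup fun u => Wmat_mem_unitaryGroup _ _ _
  rw [norm_toEuclideanLin_sub_self_sq hW, tensorMatrix_smul, tensorMatrix_smul, tensorMatrix_one,
    ← Wtens_eq_tensorMatrix, ← smul_sub, map_smul, smul_eq_mul, mul_left_comm]

theorem density_mul_norm_Wtens_sub_self_sq_mul_jacobian {n : ℕ} (f : Fin n → ℝ → ℝ)
    (θ₀ θ₁ θ₂ : Fin n → ℝ) (Φ : EuclideanSpace ℂ (Fin n → Fin 2)) :
    (∏ u, f u (θ₀ u)) * ‖Matrix.toEuclideanLin (Wtens n θ₀ θ₁ θ₂) Φ - Φ‖ ^ 2 *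
        ∏ u, (Real.sin (θ₀ u) ^ 2 * Real.sin (θ₁ u)) =
      2 * reExpectation Φ (tensorMatrix (fun u =>
          (f u (θ₀ u) * Real.sin (θ₀ u) ^ 2 * Real.sin (θ₁ u)) • 1) -
        tensorMatrix fun u => (f u (θ₀ u) * Real.sin (θ₀ u) ^ 2 * Real.sin (θ₁ u)) •
          Wmat (θ₀ u) (θ₁ u) (θ₂ u)) := by
  rw [← prod_mul_norm_Wtens_sub_self_sq, mul_right_comm, ← Finset.prod_mul_distrib]
  simp only [mul_assoc]

theorem variance_n_qubit_independent_error_general (n : ℕ) (f : Fin n → ℝ → ℝ)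
    (hf : ∀ u, IntervalIntegrable (fun θ => f u θ * Real.sin θ ^ 2) volume 0 π)
    (Φ : EuclideanSpace ℂ (Fin n → Fin 2)) :
    (∫ θ₀ in Set.pi Set.univ (fun _ : Fin n => Set.Icc (0 : ℝ) π),
      ∫ θ₁ in Set.pi Set.univ (fun _ : Fin n => Set.Icc (0 : ℝ) π),
        ∫ θ₂ in Set.pi Set.univ (fun _ : Fin n => Set.Ico (0 : ℝ) (2 * π)),
          (∏ u, f u (θ₀ u)) * ‖Matrix.toEuclideanLin (Wtens n θ₀ θ₁ θ₂) Φ - Φ‖ ^ 2 *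
            ∏ u, (Real.sin (θ₀ u) ^ 2 * Real.sin (θ₁ u))) =
      2 * (((∏ u, 4 * π * ∫ θ in 0..π, f u θ * Real.sin θ ^ 2) -
        ∏ u, 4 * π * ∫ θ in 0..π, f u θ * Real.cos θ * Real.sin θ ^ 2) * ‖Φ‖ ^ 2) := by
  have hsin (u : Fin n) : IntegrableOn (fun θ => f u θ * Real.sin θ ^ 2) (Set.Icc 0 π) :=
    (intervalIntegrable_iff_integrableOn_Icc_of_le pi_pos.le).1 (hf u)
  have hcos (u : Fin n) :
      IntegrableOn (fun θ => f u θ * Real.cos θ * Real.sin θ ^ 2) (Set.Icc 0 π) := by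
    simpa only [mul_right_comm] using (hsin u).mul_continuousOn Real.continuousOn_cos isCompact_Icc
  simp only [density_mul_norm_Wtens_sub_self_sq_mul_jacobian, integral_const_mul,
    setIntegral_setIntegral_reExpectation_Wmat, mul_right_comm _ (Real.sin _ ^ 2) (Real.cos _)]
  rw [setIntegral_reExpectation_smul_one Φ (fun u => (hsin u).const_mul (4 * π))
    (fun u => (hcos u).const_mul (4 * π))]
  simp only [integral_const_mul, integral_Icc_eq_integral_Ioc,
    intervalIntegral.integral_of_le pi_pos.le]

theorem variance_n_qubit_independent_error (n : ℕ) (f : ℝ → ℝ)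
    (hf : 4 * π * ∫ θ in (0:ℝ)..π, f θ * Real.sin θ ^ 2 = 1)
    (Φ : EuclideanSpace ℂ (Fin n → Fin 2)) (hΦ : ‖Φ‖ = 1) :
    (∫ θ₀ in Set.pi Set.univ (fun _ : Fin n => Set.Icc (0:ℝ) π),
      ∫ θ₁ in Set.pi Set.univ (fun _ : Fin n => Set.Icc (0:ℝ) π),
        ∫ θ₂ in Set.pi Set.univ (fun _ : Fin n => Set.Ico (0:ℝ) (2 * π)),
          (∏ u : Fin n, f (θ₀ u)) *
            ‖Matrix.toEuclideanLin (Wtens n θ₀ θ₁ θ₂) Φ - Φ‖ ^ 2 *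
              ∏ u : Fin n, (Real.sin (θ₀ u) ^ 2 * Real.sin (θ₁ u))) =
      2 - 2 * (4 * π * ∫ θ in (0:ℝ)..π, f θ * Real.cos θ * Real.sin θ ^ 2) ^ n := by
  rw [variance_n_qubit_independent_error_general n (fun _ => f) (fun _ =>
    intervalIntegral.intervalIntegrable_of_integral_ne_zero fun h => by simp [h] at hf) Φ]
  simp only [hf, hΦ, Finset.prod_const, Finset.card_univ, Fintype.card_fin]
  ring
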